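/- Incremental non-expansiveness under a common input: Let X ⊆ ℝ^n and W ⊆ ℝ^m be open convex sets, let f : X × W → X be C¹, let Q ∈ ℝ^{n×n} be symmetric positive definite, and suppose that for all (x, w) ∈ X × W and all δx ∈ ℝ^n: ((∂f/∂x)(x,w) δx)ᵀ Q ((∂f/∂x)(x,w) δx) ≤ δxᵀ Q δx. Then for any two trajectories x, x* of x_{k+1} = f(x_k, w̄_k) driven by the same input sequence w̄ with w̄_k ∈ W and x₀, x₀* ∈ X, the weighted distance is non-increasing from its initial value: (x_k − x*_k)ᵀ Q (x_k − x*_k) ≤ (x₀ − x₀*)ᵀ Q (x₀ − x₀*) for all k ∈ ℕ. -/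

import Mathlib

open Matrix Set

/-!
A continuous seminorm `p` is attained at any given vector by a continuous linear functional it
dominates (Hahn–Banach), so the mean value theorem for real-valued functions bounds
`p (f y - f x)` by some `p (f' z (y - x))` with `z` on the segment from `x` to `y`. A map whose
derivative is `p`-nonexpansive on a convex set is therefore `p`-nonexpansive there, and iterating
this along two trajectories shows that their `p`-distance never increases. The weighted distance
is the case of the seminorm `v ↦ √(vᵀQv)`.
-/

theorem hasFDerivAt_left_of_differentiableOn_prod {𝕜 E F G : Type*} [NontriviallyNormedField 𝕜]
    [NormedAddCommGroup E] [NormedSpace 𝕜 E] [NormedAddCommGroup F] [NormedSpace 𝕜 F]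
    [NormedAddCommGroup G] [NormedSpace 𝕜 G] {f : E × F → G} {s : Set E} {t : Set F}
    (hs : IsOpen s) (ht : IsOpen t) (hf : DifferentiableOn 𝕜 f (s ×ˢ t))
    {x : E} {y : F} (hx : x ∈ s) (hy : y ∈ t) :
    HasFDerivAt (fun z => f (z, y)) ((fderiv 𝕜 f (x, y)).comp (.inl 𝕜 E F)) x :=
  have hfxy : DifferentiableAt 𝕜 f (x, y) :=
    hf.differentiableAt ((hs.prod ht).mem_nhds ⟨hx, hy⟩)
  hfxy.hasFDerivAt.comp x (hasFDerivAt_prodMk_left x y)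

section MeanValue

theorem exists_strongDual_apply_eq_seminorm {F : Type*} [AddCommGroup F] [TopologicalSpace F]
    [Module ℝ F] [PolynormableSpace ℝ F] {p : Seminorm ℝ F} (hp : Continuous p) (v : F) :
    ∃ g : StrongDual ℝ F, g v = p v ∧ ∀ u, g u ≤ p u := by
  rcases eq_or_ne v 0 with rfl | hv
  · exact ⟨0, by simp, fun u => by simp⟩
  let coord := LinearEquiv.coord ℝ F v hv
  let φ : Module.Dual ℝ (Submodule.span ℝ {v}) := p v • coord
  have hφ_le (u : Submodule.span ℝ {v}) : φ u ≤ p u :=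
    calc
      φ u = coord u * p v := mul_comm _ _
      _ ≤ |coord u| * p v := by gcongr; exact le_abs_self _
      _ = p (coord u • v) := (map_smul_eq_mul p _ _).symm
      _ = p u := by rw [LinearEquiv.coord_apply_smul]
  obtain ⟨g, hg_eq, hg_le⟩ :=
    Module.Dual.exists_continuous_extension_of_le_seminorm_real _ φ hp hφ_le
  refine ⟨g, ?_, fun u => (le_abs_self _).trans (hg_le u)⟩
  simpa [φ, coord, LinearEquiv.coord_self] using hg_eq ⟨v, Submodule.mem_span_singleton_self v⟩

variable {E F : Type*} [NormedAddCommGroup E] [NormedSpace ℝ E]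
  [NormedAddCommGroup F] [NormedSpace ℝ F]

theorem seminorm_image_sub_le_of_hasFDerivWithinAt {p : Seminorm ℝ F} (hp : Continuous p)
    {f : E → F} {f' : E → E →L[ℝ] F} {s : Set E} {x y : E} {C : ℝ}
    (hf : ∀ z ∈ s, HasFDerivWithinAt f (f' z) s z) (hs : Convex ℝ s) (hx : x ∈ s) (hy : y ∈ s)
    (hC : ∀ z ∈ segment ℝ x y, p (f' z (y - x)) ≤ C) : p (f y - f x) ≤ C := by
  obtain ⟨g, hg_eq, hg_le⟩ := exists_strongDual_apply_eq_seminorm hp (f y - f x)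
  obtain ⟨z, hz, hgz⟩ :=
    domain_mvt (fun z hz => g.hasFDerivAt.comp_hasFDerivWithinAt z (hf z hz)) hs hx hy
  calc
    p (f y - f x) = g (f y) - g (f x) := by rw [← hg_eq, map_sub]
    _ = g (f' z (y - x)) := hgz
    _ ≤ p (f' z (y - x)) := hg_le _
    _ ≤ C := hC z hz

end MeanValue

section Trajectory

variable {S U : Type*}

/-- `x` is a trajectory of the controlled system `x (k + 1) = f (x k) (w k)` driven by the input
sequence `w`. The initial state is left free. -/
def IsTrajectory (f : S → U → S) (w : ℕ → U) (x : ℕ → S) : Prop :=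
  ∀ k, x (k + 1) = f (x k) (w k)

theorem IsTrajectory.mem {f : S → U → S} {w : ℕ → U} {x : ℕ → S} (hx : IsTrajectory f w x)
    {X : Set S} {W : Set U} (hmaps : ∀ y ∈ X, ∀ u ∈ W, f y u ∈ X) (hw : ∀ k, w k ∈ W)
    (hx0 : x 0 ∈ X) (k : ℕ) : x k ∈ X := by
  induction k with
  | zero => exact hx0
  | succ k ih => exact hx k ▸ hmaps _ ih _ (hw k)

theorem incremental_nonexpansive_common_input_general
    {E : Type*} [NormedAddCommGroup E] [NormedSpace ℝ E] {p : Seminorm ℝ E} (hp : Continuous p)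
    {X : Set E} (hX : Convex ℝ X) {W : Set U} {f : E → U → E} {f' : E → U → E →L[ℝ] E}
    (hf : ∀ y ∈ X, ∀ u ∈ W, HasFDerivWithinAt (f · u) (f' y u) X y)
    (hmaps : ∀ y ∈ X, ∀ u ∈ W, f y u ∈ X)
    (hcontr : ∀ y ∈ X, ∀ u ∈ W, ∀ v, p (f' y u v) ≤ p v)
    {w : ℕ → U} (hw : ∀ k, w k ∈ W) {x x' : ℕ → E}
    (hx : IsTrajectory f w x) (hx' : IsTrajectory f w x') (hx0 : x 0 ∈ X) (hx'0 : x' 0 ∈ X) :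
    Antitone fun k => p (x k - x' k) := by
  refine antitone_nat_of_succ_le fun k => ?_
  have hxk : x k ∈ X := hx.mem hmaps hw hx0 k
  have hx'k : x' k ∈ X := hx'.mem hmaps hw hx'0 k
  rw [hx k, hx' k]
  exact seminorm_image_sub_le_of_hasFDerivWithinAt hp (fun y hy => hf y hy _ (hw k)) hX hx'k hxk
    fun y hy => hcontr y (hX.segment_subset hx'k hxk hy) _ (hw k) _

end Trajectory

section WeightedSeminorm

variable {ι : Type*} [Fintype ι] {Q : Matrix ι ι ℝ}

/-- The weighted seminorm `v ↦ √(vᵀQv)` of a positive semidefinite real matrix `Q`, obtained from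
the pre-inner product that `Q` defines. It is bundled as a `Seminorm` because `ι → ℝ` already
carries the sup norm as an instance. -/
noncomputable def weightedSeminorm (hQ : Q.PosSemidef) : Seminorm ℝ (ι → ℝ) :=
  letI := Q.toSeminormedAddCommGroup hQ
  letI := Q.toInnerProductSpace hQ
  normSeminorm ℝ (ι → ℝ)

theorem weightedSeminorm_apply (hQ : Q.PosSemidef) (v : ι → ℝ) :
    weightedSeminorm hQ v = √(v ⬝ᵥ Q *ᵥ v) := by
  rw [dotProduct_comm]
  rfl

theorem continuous_weightedSeminorm (hQ : Q.PosSemidef) : Continuous (weightedSeminorm hQ) := by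
  rw [funext (weightedSeminorm_apply hQ)]
  fun_prop

theorem weightedSeminorm_le_weightedSeminorm_iff (hQ : Q.PosSemidef) {u v : ι → ℝ} :
    weightedSeminorm hQ u ≤ weightedSeminorm hQ v ↔ u ⬝ᵥ Q *ᵥ u ≤ v ⬝ᵥ Q *ᵥ v := by
  have hv : 0 ≤ v ⬝ᵥ Q *ᵥ v := by simpa using hQ.dotProduct_mulVec_nonneg v
  rw [weightedSeminorm_apply, weightedSeminorm_apply, Real.sqrt_le_sqrt_iff hv]

end WeightedSeminorm

/-- Incremental non-expansiveness under a common input: if the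
state Jacobian of `f` is a `Q`-contraction (non-expansion) at every
`(x, w) ∈ X × W`, then for any two trajectories of `x_{k+1} = f(x_k, w̄_k)`
driven by the same input sequence, the weighted squared distance
`(x_k − x*_k)ᵀ Q (x_k − x*_k)` never exceeds its initial value. -/
theorem incremental_nonexpansive_common_input
    (n m : ℕ)
    (X : Set (Fin n → ℝ)) (W : Set (Fin m → ℝ))
    (hXopen : IsOpen X) (hXconv : Convex ℝ X)
    (hWopen : IsOpen W) (hWconv : Convex ℝ W)
    (f : (Fin n → ℝ) × (Fin m → ℝ) → (Fin n → ℝ))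
    (hf : ContDiffOn ℝ 1 f (X ×ˢ W))
    (hfmaps : ∀ x ∈ X, ∀ w ∈ W, f (x, w) ∈ X)
    (Q : Matrix (Fin n) (Fin n) ℝ) (hQ : Q.PosDef)
    -- pointwise non-expansiveness of the differential dynamics
    (hcontr : ∀ x ∈ X, ∀ w ∈ W, ∀ δx : Fin n → ℝ,
      (fderiv ℝ f (x, w) (δx, 0)) ⬝ᵥ Q.mulVec (fderiv ℝ f (x, w) (δx, 0)) ≤
        δx ⬝ᵥ Q.mulVec δx)
    -- two trajectories with a common input sequence
    (wbar : ℕ → Fin m → ℝ) (hwbar : ∀ k, wbar k ∈ W)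
    (x xs : ℕ → Fin n → ℝ)
    (hx0 : x 0 ∈ X) (hxs0 : xs 0 ∈ X)
    (hxS : ∀ k, x (k + 1) = f (x k, wbar k))
    (hxsS : ∀ k, xs (k + 1) = f (xs k, wbar k)) :
    ∀ k : ℕ,
      (x k - xs k) ⬝ᵥ Q.mulVec (x k - xs k) ≤
        (x 0 - xs 0) ⬝ᵥ Q.mulVec (x 0 - xs 0) := by
  simp only [← weightedSeminorm_le_weightedSeminorm_iff hQ.posSemidef] at hcontr ⊢
  exact fun k => incremental_nonexpansive_common_input_general
    (continuous_weightedSeminorm hQ.posSemidef) hXconv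
    (fun _ hy _ hw => (hasFDerivAt_left_of_differentiableOn_prod hXopen hWopen
      (hf.differentiableOn one_ne_zero) hy hw).hasFDerivWithinAt)
    hfmaps hcontr hwbar hxS hxsS hx0 hxs0 k.zero_le
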